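/- Let f be an ergodic invertible measure-preserving transformation of a standard Borel probability space (X,μ) and let (f,A) be an essentially unbounded cocycle with values in SL±(2,ℝ). Then the skew product F(x,E) = (f(x), A(x)E) on X × ℙ(ℝ²) admits at most two ergodic F-invariant probability measures projecting to μ. -/

import Mathlib

open MeasureTheory Filter
open scoped ENNReal

/-- Matrices are measurable as functions of their entries. -/
instance matrixMeasurableSpace {m n α : Type*} [MeasurableSpace α] :
    MeasurableSpace (Matrix m n α) :=
  show MeasurableSpace (m → n → α) from inferInstance

/-- The shift map on two-sided sequences. -/
def shift {Y : Type*} (ω : ℤ → Y) : ℤ → Y := fun n => ω (n + 1)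

/-- The skew-shift `f̄(ω,x) = (θω, f_{ω₀}(x))` of a random transformation. -/
def fbar {Y X : Type*} (f : Y → X → X) : (ℤ → Y) × X → (ℤ → Y) × X :=
  fun q => (shift q.1, f (q.1 0) q.2)

/-- The locally constant map `Ā(ω,x) = A_{ω₀}(x)` defining a random cocycle. -/
def Abar {Y X G : Type*} (A : Y → X → G) : (ℤ → Y) × X → G := fun q => A (q.1 0) q.2

/-- Iterates of a cocycle: `cocycleIter T A n z = A(T^{n-1} z) ⋯ A(T z) A(z)`. -/
def cocycleIter {Z G : Type*} [Monoid G] (T : Z → Z) (A : Z → G) : ℕ → Z → G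
  | 0, _ => 1
  | n + 1, z => cocycleIter T A n (T z) * A z

/-- Lower asymptotic density of a set of natural numbers. -/
noncomputable def lowerDensity (D : Set ℕ) : ℝ :=
  Filter.liminf (fun n : ℕ => ((D ∩ Set.Iic n).ncard : ℝ) / n) Filter.atTop

/-- A sequence of reals converges essentially to infinity: for every `K > 0` the set
of times at which the sequence is `≤ K` has lower asymptotic density zero. -/
def ConvergesEssentiallyToInfinity (u : ℕ → ℝ) : Prop :=
  ∀ K > (0 : ℝ), lowerDensity {n | u n ≤ K} = 0

/-- The operator norm of a real `d × d` matrix acting on Euclidean space. -/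
noncomputable def opNorm {d : ℕ} (M : Matrix (Fin d) (Fin d) ℝ) : ℝ :=
  ‖LinearMap.toContinuousLinearMap (Matrix.toEuclideanLin M)‖

/-- The projective space of `ℝ^d`. -/
abbrev Proj (d : ℕ) := Projectivization ℝ (Fin d → ℝ)

noncomputable instance (d : ℕ) : MeasurableSpace (Proj d) :=
  show MeasurableSpace (Quotient _) from inferInstance

lemma glInjective {d : ℕ} (A : GL (Fin d) ℝ) :
    Function.Injective (Matrix.toLin' (A : Matrix (Fin d) (Fin d) ℝ)) := by
  have h : Function.LeftInverse
      (Matrix.toLin' (((A⁻¹ : GL (Fin d) ℝ)) : Matrix (Fin d) (Fin d) ℝ))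
      (Matrix.toLin' ((A : Matrix (Fin d) (Fin d) ℝ))) := by
    intro v
    rw [← Matrix.toLin'_mul_apply]
    have h1 : ((A⁻¹ : GL (Fin d) ℝ) : Matrix (Fin d) (Fin d) ℝ) *
        (A : Matrix (Fin d) (Fin d) ℝ) = 1 := by
      exact_mod_cast A.inv_mul
    rw [h1]
    simp
  exact h.injective

/-- The projective action of an invertible matrix on `ℙ(ℝ^d)`. -/
noncomputable def projAction {d : ℕ} (A : GL (Fin d) ℝ) : Proj d → Proj d :=
  Projectivization.map (Matrix.toLin' (A : Matrix (Fin d) (Fin d) ℝ)) (glInjective A)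

/-- Distinct ergodic probability measures are mutually singular. -/
lemma Ergodic.mutuallySingular_of_ne {Z : Type*} [MeasurableSpace Z] {T : Z → Z}
    {μ ν : Measure Z} [IsProbabilityMeasure μ] [IsProbabilityMeasure ν]
    (hμ : Ergodic T μ) (hν : Ergodic T ν) (hne : μ ≠ ν) : μ ⟂ₘ ν := by
  obtain ⟨c, hc⟩ := hμ.eq_smul_of_absolutelyContinuous
    (hμ.toMeasurePreserving.singularPart hν.toMeasurePreserving)
    (Measure.absolutelyContinuous_of_le (Measure.singularPart_le μ ν))
  rcases eq_or_ne c 0 with rfl | h0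
  · rw [zero_smul, Measure.singularPart_eq_zero] at hc
    exact absurd (hν.eq_of_absolutelyContinuous hμ.toMeasurePreserving hc) hne
  · have h := Measure.mutuallySingular_singularPart μ ν
    rw [hc] at h
    exact h.mono_ac (Measure.absolutelyContinuous_smul h0) .rfl

/-- Hopf's maximal ergodic inequality. -/
lemma MeasureTheory.MeasurePreserving.setIntegral_birkhoffSum_pos_nonneg
    {Z : Type*} [MeasurableSpace Z] {T : Z → Z} {μ : Measure Z}
    (hT : MeasurePreserving T μ μ) {g : Z → ℝ} (hgm : Measurable g) (hg : Integrable g μ) (N : ℕ) :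
    0 ≤ ∫ x in {x | ∃ n ≤ N, 0 < birkhoffSum T g n x}, g x ∂μ := by
  have hSm : ∀ n, Measurable (birkhoffSum T g n) := fun n =>
    Finset.measurable_sum _ fun k _ => hgm.comp (hT.measurable.iterate k)
  have hSi : ∀ n, Integrable (birkhoffSum T g n) μ := fun n =>
    integrable_finsetSum _ fun k _ => (hT.iterate k).integrable_comp_of_integrable hg
  let M : ℕ → Z → ℝ := fun N => (Finset.range (N + 1)).sup' ⟨0, by simp⟩ (birkhoffSum T g)
  have hM : ∀ N x, M N x = (Finset.range (N + 1)).sup' ⟨0, by simp⟩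
      (fun n => birkhoffSum T g n x) := fun N x => Finset.sup'_apply _ _ _
  have hMi : Integrable (M N) μ := by
    refine Finset.sup'_induction (p := fun h : Z → ℝ => Integrable h μ) _ _
      (fun a ha b hb => ha.sup hb) fun n _ => hSi n
  have hM0 : ∀ x, 0 ≤ M N x := fun x => by
    rw [hM]
    exact Finset.le_sup'_of_le _ (b := 0) (by simp) (by simp)
  have hset : MeasurableSet {x | ∃ n ≤ N, 0 < birkhoffSum T g n x} := by
    have : {x | ∃ n ≤ N, 0 < birkhoffSum T g n x} =
        ⋃ n ∈ Set.Iic N, {x | 0 < birkhoffSum T g n x} := by ext; simp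
    rw [this]
    exact MeasurableSet.biUnion (Set.to_countable _)
      fun n _ => measurableSet_lt measurable_const (hSm n)
  have key : ∀ x, M N x - M N (T x) ≤
      {x | ∃ n ≤ N, 0 < birkhoffSum T g n x}.indicator g x := by
    intro x
    by_cases hx : ∃ n ≤ N, 0 < birkhoffSum T g n x
    · rw [Set.indicator_of_mem (by exact hx), sub_le_iff_le_add, hM]
      refine Finset.sup'_le _ _ fun n hn => ?_
      have hpos : ∀ n, n ≤ N → birkhoffSum T g (n + 1) x ≤ g x + M N (T x) := fun n hn => by
        rw [birkhoffSum_succ', hM]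
        gcongr
        exact Finset.le_sup' (fun n => birkhoffSum T g n (T x)) (by simpa using by omega)
      rcases n with _ | n
      · obtain ⟨m, hm, h⟩ := hx
        rcases m with _ | m
        · simp at h
        · simpa using h.le.trans (hpos m (by omega))
      · exact hpos n (by simp at hn; omega)
    · rw [Set.indicator_of_notMem (by exact hx)]
      have : M N x ≤ 0 := by
        rw [hM]
        refine Finset.sup'_le _ _ fun n hn => ?_
        push Not at hx
        exact hx n (by simp at hn; omega)
      linarith [hM0 (T x)]
  have hMT : Integrable (fun x => M N (T x)) μ := hT.integrable_comp_of_integrable hMi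
  rw [← integral_indicator hset]
  calc (0 : ℝ) = ∫ x, (M N x - M N (T x)) ∂μ := by
        have h : ∫ x, M N (T x) ∂μ = ∫ x, M N x ∂μ := by
          conv_rhs => rw [← hT.map_eq]
          rw [integral_map hT.measurable.aemeasurable]
          rw [hT.map_eq]
          exact hMi.aestronglyMeasurable
        rw [integral_sub hMi hMT, h, sub_self]
    _ ≤ _ := integral_mono (hMi.sub hMT) (hg.indicator hset) key

open Classical in
/-- The points whose orbit spends, up to some time, more than half of the time outside `B` form a
set of measure at most `2 μ(Bᶜ)`. -/
lemma MeasureTheory.MeasurePreserving.measure_exists_lt_two_mul_card_le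
    {Z : Type*} [MeasurableSpace Z] {T : Z → Z} {μ : Measure Z} [IsFiniteMeasure μ]
    (hT : MeasurePreserving T μ μ) {B : Set Z} (hB : MeasurableSet B) :
    μ {x | ∃ n : ℕ, n < 2 * ((Finset.range n).filter fun k => T^[k] x ∉ B).card} ≤ 2 * μ Bᶜ := by
  set g : Z → ℝ := fun x => Bᶜ.indicator (fun _ => 1) x - 1 / 2 with hgdef
  have hgm : Measurable g := (measurable_const.indicator hB.compl).sub_const _
  have hi : Integrable (Bᶜ.indicator fun _ => (1 : ℝ)) μ :=
    (integrable_const _).indicator hB.compl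
  have hg : Integrable g μ := hi.sub (integrable_const _)
  let P : ℕ → Set Z := fun N => {x | ∃ n ≤ N, 0 < birkhoffSum T g n x}
  have hP : ∀ N, μ (P N) ≤ 2 * μ Bᶜ := fun N => by
    have h := hT.setIntegral_birkhoffSum_pos_nonneg hgm hg N
    change 0 ≤ ∫ x in P N, g x ∂μ at h
    rw [hgdef, integral_sub hi.integrableOn (integrable_const _).integrableOn,
      integral_indicator hB.compl, setIntegral_const, setIntegral_const,
      measureReal_restrict_apply hB.compl] at h
    have h1 : μ.real (Bᶜ ∩ P N) ≤ μ.real Bᶜ := measureReal_mono Set.inter_subset_left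
    have h2 : μ.real (P N) ≤ 2 * μ.real Bᶜ := by
      simp only [smul_eq_mul] at h
      linarith
    rw [← ENNReal.toReal_le_toReal (by finiteness) (by finiteness), ENNReal.toReal_mul]
    simpa [Measure.real] using h2
  have hmono : Monotone P := fun N N' h x ⟨n, hn, hx⟩ => ⟨n, hn.trans h, hx⟩
  have hU : {x | ∃ n : ℕ, n < 2 * ((Finset.range n).filter fun k => T^[k] x ∉ B).card} ⊆
      ⋃ N, P N := by
    rintro x ⟨n, hn⟩
    refine Set.mem_iUnion.2 ⟨n, n, le_rfl, ?_⟩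
    have : birkhoffSum T g n x =
        ((Finset.range n).filter fun k => T^[k] x ∉ B).card - (n : ℝ) / 2 := by
      simp only [birkhoffSum, hgdef, Finset.sum_sub_distrib, Set.indicator_apply,
        Set.mem_compl_iff, Finset.sum_boole]
      simp
      ring
    rw [this]
    have : (n : ℝ) < 2 * ((Finset.range n).filter fun k => T^[k] x ∉ B).card := by
      exact_mod_cast hn
    linarith
  refine (measure_mono hU).trans ?_
  rw [hmono.measure_iUnion]
  exact iSup_le hP

open Classical in
/-- Inside a set of measure almost one there are typical points whose orbit spends at least half of
the time, up to every time, in that set. -/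
lemma MeasureTheory.MeasurePreserving.exists_mem_two_mul_card_le
    {Z : Type*} [MeasurableSpace Z] {T : Z → Z} {μ : Measure Z} [IsProbabilityMeasure μ]
    (hT : MeasurePreserving T μ μ) {B : Set Z} (hB : MeasurableSet B) (hμB : μ Bᶜ < 1 / 4)
    {p : Z → Prop} (hp : ∀ᵐ x ∂μ, p x) :
    ∃ x ∈ B, p x ∧ ∀ n : ℕ, 2 * ((Finset.range n).filter fun k => T^[k] x ∉ B).card ≤ n := by
  by_contra! hcon
  set R := {x | ∃ n : ℕ, n < 2 * ((Finset.range n).filter fun k => T^[k] x ∉ B).card}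
  have h1 : ∀ᵐ x ∂μ, x ∈ R ∪ Bᶜ := by
    filter_upwards [hp] with x hx
    by_cases hxB : x ∈ B
    · exact Or.inl (hcon x hxB hx)
    · exact Or.inr hxB
  have h2 : 1 ≤ 3 * μ Bᶜ := by
    calc 1 = μ (R ∪ Bᶜ) := by exact ((measure_congr (eventuallyEq_univ.2 h1)).trans measure_univ).symm
      _ ≤ μ R + μ Bᶜ := measure_union_le _ _
      _ ≤ 2 * μ Bᶜ + μ Bᶜ := add_le_add_left (hT.measure_exists_lt_two_mul_card_le hB) _
      _ = 3 * μ Bᶜ := by ring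
  have h3 : (1 : ℝ) ≤ 3 * (μ Bᶜ).toReal := by
    have := ENNReal.toReal_mono (by finiteness) h2
    simpa using this
  have h4 : (μ Bᶜ).toReal < 1 / 4 := by
    have := ENNReal.toReal_strict_mono (by simp) hμB
    simpa using this
  linarith

/-- Being a standard Borel space is invariant under measurable equivalences. -/
lemma MeasurableEquiv.standardBorelSpace {α β : Type*} [MeasurableSpace α] [mβ : MeasurableSpace β]
    [StandardBorelSpace β] (e : α ≃ᵐ β) : StandardBorelSpace α := by
  obtain ⟨τ, hB, hP⟩ := StandardBorelSpace.polish (α := β)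
  refine ⟨τ.induced e, ?_, e.toEquiv.polishSpace_induced⟩
  let := τ.induced e
  refine ⟨?_⟩
  exact e.measurableEmbedding.comap_eq.symm.trans
    ((congrArg (MeasurableSpace.comap (e : α → β)) hB.measurable_eq).trans borel_comap.symm)

/-- A representative of a point of the projective line in one of the two standard affine charts. -/
noncomputable def projChart : Proj 2 → Fin 2 → ℝ :=
  Projectivization.lift (fun v => if v.1 1 = 0 then ![1, 0] else (v.1 1)⁻¹ • v.1) <| by
    rintro ⟨v, hv⟩ ⟨w, hw⟩ t rfl
    have ht : t ≠ 0 := by rintro rfl; simp at hv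
    by_cases h : w 1 = 0
    · simp [h]
    · simp [h, ht, smul_smul]

lemma projChart_mk (v : Fin 2 → ℝ) (hv : v ≠ 0) :
    projChart (Projectivization.mk ℝ v hv) = if v 1 = 0 then ![1, 0] else (v 1)⁻¹ • v := rfl

lemma exists_projChart_mk_eq_smul (v : Fin 2 → ℝ) (hv : v ≠ 0) :
    ∃ a : ℝ, a ≠ 0 ∧ projChart (Projectivization.mk ℝ v hv) = a • v := by
  rw [projChart_mk]
  split_ifs with h
  · have h0 : v 0 ≠ 0 := fun h0 => hv (by ext i; fin_cases i <;> simp [h0, h])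
    refine ⟨(v 0)⁻¹, inv_ne_zero h0, ?_⟩
    ext i
    fin_cases i <;> simp [h0, h]
  · exact ⟨_, inv_ne_zero h, rfl⟩

lemma projChart_ne_zero (u : Proj 2) : projChart u ≠ 0 := by
  induction u using Projectivization.ind with
  | h v hv =>
    obtain ⟨a, ha, h⟩ := exists_projChart_mk_eq_smul v hv
    rw [h]
    exact smul_ne_zero ha hv

lemma mk_projChart (u : Proj 2) : Projectivization.mk ℝ (projChart u) (projChart_ne_zero u) = u := by
  induction u using Projectivization.ind with
  | h v hv =>
    obtain ⟨a, -, h⟩ := exists_projChart_mk_eq_smul v hv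
    exact (Projectivization.mk_eq_mk_iff' _ _ _ _ _).2 ⟨a, h.symm⟩

lemma measurable_projMk :
    Measurable fun v : {v : Fin 2 → ℝ // v ≠ 0} => Projectivization.mk ℝ v.1 v.2 :=
  fun _ hs => hs

lemma measurable_projChart : Measurable projChart := by
  refine (@measurable_from_quotient _ _ _ _ (projectivizationSetoid ℝ (Fin 2 → ℝ)) projChart).2 ?_
  have h : Measurable fun v : {v : Fin 2 → ℝ // v ≠ 0} => v.1 1 :=
    (measurable_pi_apply 1).comp measurable_subtype_coe
  exact Measurable.ite (measurableSet_eq_fun h measurable_const) measurable_const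
    (h.inv.smul measurable_subtype_coe)

instance : StandardBorelSpace (Proj 2) := by
  let c : Proj 2 → {v : Fin 2 → ℝ // v ≠ 0} := fun u => ⟨projChart u, projChart_ne_zero u⟩
  have hc : Measurable c := measurable_projChart.subtype_mk
  have hV : MeasurableSet {v : Fin 2 → ℝ | v ≠ 0} := (measurableSet_singleton 0).compl
  have : StandardBorelSpace {v : Fin 2 → ℝ // v ≠ 0} := hV.standardBorel
  let e : Proj 2 ≃ᵐ Set.range c :=
    { toFun := Set.rangeFactorization c
      invFun := fun v => Projectivization.mk ℝ v.1.1 v.1.2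
      left_inv := mk_projChart
      right_inv := by
        rintro ⟨_, u, rfl⟩
        exact Subtype.ext (congrArg c (mk_projChart u))
      measurable_toFun := hc.subtype_mk
      measurable_invFun := measurable_projMk.comp measurable_subtype_coe }
  have hr : Set.range c = {v | c (Projectivization.mk ℝ v.1 v.2) = v} := by
    ext v
    refine ⟨?_, fun h => ⟨_, h⟩⟩
    rintro ⟨u, rfl⟩
    exact congrArg c (mk_projChart u)
  have hrm : MeasurableSet (Set.range c) := by
    rw [hr]
    exact measurableSet_eq_fun (hc.comp measurable_projMk) measurable_id
  have : StandardBorelSpace (Set.range c) := hrm.standardBorel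
  exact e.standardBorelSpace

/-- The oriented area of the parallelogram spanned by two plane vectors. -/
def wedge (v w : Fin 2 → ℝ) : ℝ := v 0 * w 1 - v 1 * w 0

lemma wedge_smul_smul (a b : ℝ) (v w : Fin 2 → ℝ) : wedge (a • v) (b • w) = a * b * wedge v w := by
  simp [wedge]
  ring

lemma wedge_mulVec (M : Matrix (Fin 2) (Fin 2) ℝ) (v w : Fin 2 → ℝ) :
    wedge (M.mulVec v) (M.mulVec w) = M.det * wedge v w := by
  simp [wedge, Matrix.det_fin_two, Matrix.mulVec, dotProduct, Fin.sum_univ_two]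
  ring

/-- The Euclidean norm of a plane vector. -/
noncomputable def euclNorm (v : Fin 2 → ℝ) : ℝ := ‖WithLp.toLp 2 v‖

lemma euclNorm_smul (a : ℝ) (v : Fin 2 → ℝ) : euclNorm (a • v) = |a| * euclNorm v := by
  rw [euclNorm, WithLp.toLp_smul, norm_smul, Real.norm_eq_abs, euclNorm]

lemma euclNorm_pos {v : Fin 2 → ℝ} (hv : v ≠ 0) : 0 < euclNorm v := by
  rw [euclNorm, norm_pos_iff]
  simpa using hv

lemma euclNorm_sq (v : Fin 2 → ℝ) : euclNorm v ^ 2 = v 0 ^ 2 + v 1 ^ 2 := by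
  simp [euclNorm, EuclideanSpace.real_norm_sq_eq, Fin.sum_univ_two]

lemma abs_wedge_le (v w : Fin 2 → ℝ) : |wedge v w| ≤ euclNorm v * euclNorm w := by
  refine abs_le_of_sq_le_sq ?_ (mul_nonneg (norm_nonneg _) (norm_nonneg _))
  rw [mul_pow, euclNorm_sq, euclNorm_sq, wedge]
  nlinarith [sq_nonneg (v 0 * w 0 + v 1 * w 1)]

lemma abs_wedge_mul_euclNorm_le (a b w : Fin 2 → ℝ) :
    |wedge a b| * euclNorm w ≤ |wedge a w| * euclNorm b + |wedge b w| * euclNorm a := by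
  have h : wedge a b • w = wedge a w • b + (-wedge b w) • a := by
    ext i
    fin_cases i <;> simp [wedge] <;> ring
  calc |wedge a b| * euclNorm w = euclNorm (wedge a b • w) := (euclNorm_smul _ _).symm
    _ ≤ euclNorm (wedge a w • b) + euclNorm ((-wedge b w) • a) := by
        rw [h]
        exact norm_add_le (WithLp.toLp 2 (wedge a w • b)) (WithLp.toLp 2 ((-wedge b w) • a))
    _ = _ := by rw [euclNorm_smul, euclNorm_smul, abs_neg]

/-- The sine of the angle between two lines of the plane. -/
noncomputable def projSin (u v : Proj 2) : ℝ :=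
  |wedge (projChart u) (projChart v)| / (euclNorm (projChart u) * euclNorm (projChart v))

lemma projSin_mk_mk (v w : Fin 2 → ℝ) (hv : v ≠ 0) (hw : w ≠ 0) :
    projSin (Projectivization.mk ℝ v hv) (Projectivization.mk ℝ w hw) =
      |wedge v w| / (euclNorm v * euclNorm w) := by
  obtain ⟨a, ha, h⟩ := exists_projChart_mk_eq_smul v hv
  obtain ⟨b, hb, h'⟩ := exists_projChart_mk_eq_smul w hw
  have := euclNorm_pos hv
  have := euclNorm_pos hw
  rw [projSin, h, h', wedge_smul_smul, euclNorm_smul, euclNorm_smul, abs_mul, abs_mul]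
  field_simp

lemma projSin_nonneg (u v : Proj 2) : 0 ≤ projSin u v :=
  div_nonneg (abs_nonneg _) (mul_nonneg (norm_nonneg _) (norm_nonneg _))

lemma projSin_le_add (u v w : Proj 2) : projSin u v ≤ projSin u w + projSin v w := by
  have hu := euclNorm_pos (projChart_ne_zero u)
  have hv := euclNorm_pos (projChart_ne_zero v)
  have hw := euclNorm_pos (projChart_ne_zero w)
  have h := abs_wedge_mul_euclNorm_le (projChart u) (projChart v) (projChart w)
  rw [projSin, projSin, projSin, div_add_div _ _ (by positivity) (by positivity),
    div_le_div_iff₀ (by positivity) (by positivity)]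
  have := mul_le_mul_of_nonneg_right h
    (a := euclNorm (projChart u) * euclNorm (projChart v) * euclNorm (projChart w)) (by positivity)
  nlinarith

lemma eq_of_projSin_eq_zero {u v : Proj 2} (h : projSin u v = 0) : u = v := by
  induction u using Projectivization.ind with
  | h a ha =>
  induction v using Projectivization.ind with
  | h b hb =>
    rw [projSin_mk_mk, div_eq_zero_iff, or_iff_left
      (mul_pos (euclNorm_pos ha) (euclNorm_pos hb)).ne', abs_eq_zero, wedge, sub_eq_zero] at h
    rw [Projectivization.mk_eq_mk_iff']
    by_cases h1 : b 1 = 0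
    · have h0 : b 0 ≠ 0 := fun h0 => hb (by ext i; fin_cases i <;> simp [h0, h1])
      have h1' : a 1 = 0 := by simpa [h1, h0] using h
      refine ⟨a 0 / b 0, ?_⟩
      ext i
      fin_cases i <;> simp [h0, h1, h1']
    · refine ⟨a 1 / b 1, ?_⟩
      ext i
      fin_cases i <;> simp [h1]
      field_simp
      linarith

lemma measurable_projSin : Measurable fun p : Proj 2 × Proj 2 => projSin p.1 p.2 := by
  have hN : Measurable euclNorm :=
    (PiLp.continuous_toLp 2 _).norm.measurable
  have h1 : Measurable fun p : Proj 2 × Proj 2 => projChart p.1 :=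
    measurable_projChart.comp measurable_fst
  have h2 : Measurable fun p : Proj 2 × Proj 2 => projChart p.2 :=
    measurable_projChart.comp measurable_snd
  have hw : Measurable fun p : Proj 2 × Proj 2 => wedge (projChart p.1) (projChart p.2) :=
    (((measurable_pi_apply 0).comp h1).mul ((measurable_pi_apply 1).comp h2)).sub
      (((measurable_pi_apply 1).comp h1).mul ((measurable_pi_apply 0).comp h2))
  exact (continuous_abs.measurable.comp hw).div ((hN.comp h1).mul (hN.comp h2))

lemma projAction_mk {d : ℕ} (g : GL (Fin d) ℝ) (v : Fin d → ℝ) (hv : v ≠ 0) :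
    ∃ h, projAction g (Projectivization.mk ℝ v hv) =
      Projectivization.mk ℝ ((g : Matrix (Fin d) (Fin d) ℝ).mulVec v) h := by
  refine ⟨?_, Projectivization.map_mk _ _ _ _⟩
  rw [← Matrix.toLin'_apply]
  exact fun h => hv (glInjective g (h.trans (map_zero _).symm))

lemma projAction_one {d : ℕ} (u : Proj d) : projAction (1 : GL (Fin d) ℝ) u = u := by
  induction u using Projectivization.ind with
  | h v hv =>
    obtain ⟨h, e⟩ := projAction_mk (1 : GL (Fin d) ℝ) v hv
    rw [e]
    congr 1
    simp

lemma projAction_mul {d : ℕ} (g g' : GL (Fin d) ℝ) (u : Proj d) :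
    projAction (g * g') u = projAction g (projAction g' u) := by
  induction u using Projectivization.ind with
  | h v hv =>
    obtain ⟨h, e⟩ := projAction_mk (g * g') v hv
    obtain ⟨h', e'⟩ := projAction_mk g' v hv
    obtain ⟨h'', e''⟩ := projAction_mk g _ h'
    rw [e, e', e'']
    congr 1
    simp

lemma measurable_projAction (g : GL (Fin 2) ℝ) : Measurable (projAction g) := by
  have h : projAction g = fun u => projAction g (Projectivization.mk ℝ _ (projChart_ne_zero u)) :=
    funext fun u => by rw [mk_projChart]
  rw [h]
  have hc : Measurable fun u : Proj 2 => (g : Matrix (Fin 2) (Fin 2) ℝ).mulVec (projChart u) :=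
    (Matrix.toLin' (g : Matrix (Fin 2) (Fin 2) ℝ)).continuous_of_finiteDimensional.measurable.comp
      measurable_projChart
  exact measurable_projMk.comp (hc.subtype_mk
    (h := fun u => (projAction_mk g _ (projChart_ne_zero u)).1))

/-- A matrix of large norm and determinant `±1` cuts the projective line into a small piece and a
piece with small image. -/
lemma exists_measurableSet_projSin_lt (g : GL (Fin 2) ℝ)
    (hdet : |(g : Matrix (Fin 2) (Fin 2) ℝ).det| = 1) {δ : ℝ} (hδ : 0 < δ) (hδ1 : δ ≤ 1)
    (hg : 4 / δ ^ 2 < opNorm (g : Matrix (Fin 2) (Fin 2) ℝ)) :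
    ∃ S : Set (Proj 2), MeasurableSet S ∧ (∀ u ∈ Sᶜ, ∀ v ∈ Sᶜ, projSin u v < δ) ∧
      ∀ u ∈ S, ∀ v ∈ S, projSin (projAction g u) (projAction g v) < δ := by
  set M := (g : Matrix (Fin 2) (Fin 2) ℝ) with hM
  obtain ⟨e, he⟩ : ∃ e : Fin 2 → ℝ, 4 / δ ^ 2 * euclNorm e < euclNorm (M.mulVec e) := by
    by_contra! h
    refine hg.not_ge (ContinuousLinearMap.opNorm_le_bound _ (by positivity) fun x => ?_)
    exact h x.ofLp
  have he0 : e ≠ 0 := by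
    rintro rfl
    simp [euclNorm] at he
  have hne : ∀ v : Fin 2 → ℝ, v ≠ 0 → M.mulVec v ≠ 0 := fun v hv => (projAction_mk g v hv).1
  have hpe := euclNorm_pos he0
  have hpge := euclNorm_pos (hne e he0)
  set w := projAction g (Projectivization.mk ℝ e he0) with hw
  refine ⟨{u | projSin (projAction g u) w < δ / 2}, ?_, ?_, ?_⟩
  · exact measurableSet_lt (measurable_projSin.comp
      ((measurable_projAction g).prodMk measurable_const)) measurable_const
  · have key : ∀ v : Fin 2 → ℝ, ∀ hv : v ≠ 0,
        Projectivization.mk ℝ v hv ∈ {u | projSin (projAction g u) w < δ / 2}ᶜ →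
          euclNorm (M.mulVec v) < δ / 2 * euclNorm v := by
      intro v hv hvS
      obtain ⟨h1, e1⟩ := projAction_mk g v hv
      obtain ⟨h2, e2⟩ := projAction_mk g e he0
      rw [Set.mem_compl_iff, Set.mem_ofPred_eq, not_lt, hw, e1, e2, projSin_mk_mk, wedge_mulVec,
        abs_mul, hdet, one_mul] at hvS
      have hpv := euclNorm_pos hv
      have hpgv := euclNorm_pos h1
      have h3 := hvS.trans (div_le_div_of_nonneg_right (abs_wedge_le v e) (by positivity))
      rw [le_div_iff₀ (by positivity)] at h3
      have h4 : δ / 2 * (euclNorm (M.mulVec v) * (4 / δ ^ 2 * euclNorm e)) <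
          euclNorm v * euclNorm e := lt_of_lt_of_le (by gcongr) h3
      have h5 : δ / 2 * (euclNorm (M.mulVec v) * (4 / δ ^ 2 * euclNorm e)) =
          (2 / δ * euclNorm (M.mulVec v)) * euclNorm e := by
        field_simp
        ring
      rw [h5] at h4
      have h6 := lt_of_mul_lt_mul_right h4 hpe.le
      rw [div_mul_eq_mul_div, div_lt_iff₀ hδ] at h6
      linarith
    intro u hu v hv
    induction u using Projectivization.ind with
    | h a ha =>
    induction v using Projectivization.ind with
    | h b hb =>
      have hpa := euclNorm_pos ha
      have hpb := euclNorm_pos hb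
      have h1 := key a ha hu
      have h2 := key b hb hv
      rw [projSin_mk_mk, div_lt_iff₀ (by positivity)]
      have h3 := abs_wedge_le (M.mulVec a) (M.mulVec b)
      rw [wedge_mulVec, abs_mul, hdet, one_mul] at h3
      calc |wedge a b| ≤ euclNorm (M.mulVec a) * euclNorm (M.mulVec b) := h3
        _ ≤ (δ / 2 * euclNorm a) * (δ / 2 * euclNorm b) :=
            mul_le_mul h1.le h2.le (norm_nonneg _) (by positivity)
        _ = δ ^ 2 / 4 * (euclNorm a * euclNorm b) := by ring
        _ < δ * (euclNorm a * euclNorm b) := by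
            gcongr
            nlinarith
  · intro u hu v hv
    have := projSin_le_add (projAction g u) (projAction g v) w
    simp only [Set.mem_ofPred_eq] at hu hv
    linarith

open ProbabilityTheory in
/-- The disintegration of a measure invariant under a skew product is equivariant. -/
lemma condKernel_map_ae_eq_of_skewProduct {X Ω : Type*} [MeasurableSpace X] [StandardBorelSpace X]
    [MeasurableSpace Ω] [StandardBorelSpace Ω] [Nonempty Ω] {ρ : Measure (X × Ω)}
    [IsProbabilityMeasure ρ] {f : X → X} (hinj : Function.Injective f)
    (hf : MeasurePreserving f ρ.fst ρ.fst) {a : X → Ω → Ω}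
    (ha : MeasurePreserving (fun q : X × Ω => (f q.1, a q.1 q.2)) ρ ρ) :
    ∀ᵐ x ∂ρ.fst, (ρ.condKernel x).map (a x) = ρ.condKernel (f x) := by
  have ham : Measurable fun q : X × Ω => a q.1 q.2 := measurable_snd.comp ha.measurable
  have hax : ∀ x, Measurable (a x) := fun x => ham.comp measurable_prodMk_left
  let κ : Kernel X Ω := (Kernel.id ×ₖ ρ.condKernel).map fun q => a q.1 q.2
  have hκ : ∀ x, κ x = (ρ.condKernel x).map (a x) := fun x => by
    rw [Kernel.map_apply _ ham, Kernel.prod_apply, Kernel.id_apply, Measure.dirac_prod,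
      Measure.map_map ham measurable_prodMk_left]
    rfl
  have : IsMarkovKernel κ := Kernel.IsMarkovKernel.map _ ham
  have hemb : MeasurableEmbedding (Prod.map f (id : Ω → Ω)) :=
    (hf.measurable.prodMap measurable_id).measurableEmbedding (hinj.prodMap Function.injective_id)
  have heq : ρ.fst ⊗ₘ κ = ρ.fst ⊗ₘ ρ.condKernel.comap f hf.measurable := by
    ext s hs
    obtain ⟨t, ht, rfl⟩ : ∃ t, MeasurableSet t ∧ Prod.map f id ⁻¹' t = s :=
      ⟨_, hemb.measurableSet_image.2 hs, Set.preimage_image_eq _ hemb.injective⟩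
    rw [Measure.compProd_apply hs, Measure.compProd_apply hs]
    have h1 : ∫⁻ x, κ x (Prod.mk x ⁻¹' (Prod.map f id ⁻¹' t)) ∂ρ.fst = ρ t := by
      calc _ = ∫⁻ x, ρ.condKernel x (Prod.mk x ⁻¹' ((fun q : X × Ω => (f q.1, a q.1 q.2)) ⁻¹' t))
              ∂ρ.fst := by
            refine lintegral_congr fun x => ?_
            rw [hκ, Measure.map_apply (hax x) (measurable_prodMk_left hs)]
            rfl
        _ = ρ t := by
            rw [← Measure.compProd_apply (ha.measurable ht), ρ.disintegrate ρ.condKernel,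
              ha.measure_preimage ht.nullMeasurableSet]
    have h2 : ∫⁻ x, ρ.condKernel (f x) (Prod.mk (f x) ⁻¹' t) ∂ρ.fst = ρ t := by
      rw [hf.lintegral_comp (f := fun y => ρ.condKernel y (Prod.mk y ⁻¹' t))
        (Kernel.measurable_kernel_prodMk_left ht), ← Measure.compProd_apply ht,
        ρ.disintegrate ρ.condKernel]
    rw [h1]
    exact h2.symm
  filter_upwards [Kernel.ae_eq_of_compProd_eq heq] with x hx
  rw [← hκ, hx, Kernel.comap_apply]

/-- The diagonal is null for the product of two mutually singular measures. -/
lemma MeasureTheory.Measure.MutuallySingular.prod_diagonal {Ω : Type*} [MeasurableSpace Ω]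
    {μ ν : Measure Ω} [SFinite μ] [SFinite ν] (h : μ ⟂ₘ ν) :
    μ.prod ν {p | p.1 = p.2} = 0 := by
  obtain ⟨s, -, hμ, hν⟩ := h
  refine measure_mono_null (t := s ×ˢ Set.univ ∪ Set.univ ×ˢ sᶜ) ?_ ?_
  · rintro ⟨u, v⟩ (rfl : u = v)
    by_cases hu : u ∈ s <;> simp [hu]
  · rw [measure_union_null_iff, Measure.prod_prod, Measure.prod_prod, hμ, hν]
    simp

/-- The conditional measures of two mutually singular measures with the same marginal are almost
surely mutually singular. -/
lemma condKernel_mutuallySingular {X Ω : Type*} [MeasurableSpace X] [MeasurableSpace Ω]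
    [StandardBorelSpace Ω] [Nonempty Ω] {μ : Measure X} {ρ ρ' : Measure (X × Ω)}
    [IsFiniteMeasure ρ] [IsFiniteMeasure ρ'] (h : ρ ⟂ₘ ρ') (hρ : ρ.fst = μ) (hρ' : ρ'.fst = μ) :
    ∀ᵐ x ∂μ, ρ.condKernel x ⟂ₘ ρ'.condKernel x := by
  obtain ⟨s, hs, h1, h2⟩ := h
  subst hρ
  rw [← ρ.disintegrate ρ.condKernel] at h1
  rw [← ρ'.disintegrate ρ'.condKernel, hρ'] at h2
  filter_upwards [Measure.ae_ae_of_ae_compProd (measure_eq_zero_iff_ae_notMem.1 h1),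
    Measure.ae_ae_of_ae_compProd (measure_eq_zero_iff_ae_notMem.1 h2)] with x hx1 hx2
  refine ⟨_, measurable_prodMk_left hs, measure_eq_zero_iff_ae_notMem.2 hx1,
    measure_eq_zero_iff_ae_notMem.2 hx2⟩

open ProbabilityTheory in
/-- If kernels give no mass to the zero set of a nonnegative function, then outside a set of small
measure they uniformly give small mass to its small sublevel sets. -/
lemma tendsto_measure_compl_forall_kernel_lt {X Z ι : Type*} [Finite ι] [MeasurableSpace X]
    [MeasurableSpace Z] {μ : Measure X} [IsFiniteMeasure μ] (η : ι → Kernel X Z)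
    [∀ i, IsFiniteKernel (η i)] {h : Z → ℝ} (hm : Measurable h)
    (h0 : ∀ᵐ x ∂μ, ∀ i, η i x {z | h z ≤ 0} = 0) {ε : ℝ≥0∞} (hε : 0 < ε) :
    Tendsto (fun n : ℕ => μ {x | ∀ i, η i x {z | h z < 1 / ((n : ℝ) + 1)} < ε}ᶜ) atTop (nhds 0) := by
  have hs : ∀ n : ℕ, MeasurableSet {z | h z < 1 / ((n : ℝ) + 1)} :=
    fun n => measurableSet_lt hm measurable_const
  have hanti : Antitone fun n : ℕ => {z | h z < 1 / ((n : ℝ) + 1)} := fun m n hmn z hz =>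
    lt_of_lt_of_le (show h z < 1 / ((n : ℝ) + 1) from hz) (Nat.one_div_le_one_div hmn)
  have hlim : ∀ᵐ x ∂μ, ∀ i, Tendsto (fun n : ℕ => η i x {z | h z < 1 / ((n : ℝ) + 1)}) atTop
      (nhds 0) := by
    filter_upwards [h0] with x hx i
    have hinter : ⋂ n : ℕ, {z | h z < 1 / ((n : ℝ) + 1)} ⊆ {z | h z ≤ 0} := fun z hz =>
      ge_of_tendsto' (b := h z) tendsto_one_div_add_atTop_nhds_zero_nat fun n =>
        (show h z < 1 / ((n : ℝ) + 1) from Set.mem_iInter.1 hz n).le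
    rw [← measure_mono_null hinter (hx i)]
    exact tendsto_measure_iInter_atTop (fun n => (hs n).nullMeasurableSet) hanti
      ⟨0, measure_ne_top _ _⟩
  have hnull : μ (⋂ n : ℕ, {x | ∀ i, η i x {z | h z < 1 / ((n : ℝ) + 1)} < ε}ᶜ) = 0 := by
    refine measure_mono_null ?_ (ae_iff.1 hlim)
    intro x hx hx'
    obtain ⟨n, hn⟩ := (eventually_all.2 fun i => (hx' i).eventually_lt_const hε).exists
    exact Set.mem_iInter.1 hx n hn
  rw [← hnull]
  refine tendsto_measure_iInter_atTop (fun n => ?_) (fun m n hmn => ?_) ⟨0, measure_ne_top _ _⟩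
  · refine MeasurableSet.nullMeasurableSet (MeasurableSet.compl ?_)
    have : {x | ∀ i, η i x {z | h z < 1 / ((n : ℝ) + 1)} < ε} =
        ⋂ i, {x | η i x {z | h z < 1 / ((n : ℝ) + 1)} < ε} := by ext; simp
    rw [this]
    exact MeasurableSet.iInter fun i =>
      measurableSet_lt ((η i).measurable_coe (hs n)) measurable_const
  · exact Set.compl_subset_compl.2 fun x hx i => (measure_mono (hanti hmn)).trans_lt (hx i)

open Classical in
/-- A set of integers that misses at most half of each initial segment has lower density at least
one half. -/
lemma one_half_le_lowerDensity {D : Set ℕ}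
    (h : ∀ n : ℕ, 2 * ((Finset.range n).filter fun k => k ∉ D).card ≤ n) :
    1 / 2 ≤ lowerDensity D := by
  have hfin : ∀ n, (D ∩ Set.Iic n).Finite := fun n => (Set.finite_Iic n).inter_of_right D
  refine le_liminf_of_le (isCoboundedUnder_ge_of_le (x := 2) _ fun n => ?_) ?_
  · have h1 : (D ∩ Set.Iic n).ncard ≤ n + 1 := by
      refine (Set.ncard_le_ncard Set.inter_subset_right (Set.finite_Iic n)).trans ?_
      simp [Set.ncard_eq_toFinset_card']
    rcases n with _ | n
    · simp
    · rw [div_le_iff₀ (by positivity)]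
      have : ((D ∩ Set.Iic (n + 1)).ncard : ℝ) ≤ n + 1 + 1 := by exact_mod_cast h1
      push_cast
      linarith [(Nat.cast_nonneg n : (0 : ℝ) ≤ n)]
  · filter_upwards [eventually_gt_atTop 0] with n hn
    have h1 : ((Finset.range n).filter fun k => k ∈ D).card ≤ (D ∩ Set.Iic n).ncard := by
      rw [← Set.ncard_coe_finset]
      refine Set.ncard_le_ncard (fun k hk => ?_) (hfin n)
      simp only [Finset.coe_filter, Finset.mem_range, Set.mem_ofPred_eq] at hk
      exact ⟨hk.2, hk.1.le⟩
    have h2 := Finset.card_filter_add_card_filter_not (s := Finset.range n) (fun k => k ∈ D)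
    rw [Finset.card_range] at h2
    have h3 : n ≤ 2 * (D ∩ Set.Iic n).ncard := by
      have := h n
      omega
    have h4 : (n : ℝ) ≤ 2 * (D ∩ Set.Iic n).ncard := by exact_mod_cast h3
    rw [le_div_iff₀ (by positivity)]
    linarith

/-- A matrix of determinant `±1` that maps three uniformly separated measures on the projective
line to uniformly separated measures has bounded norm. -/
lemma opNorm_le_of_prod_projSin_lt (g : GL (Fin 2) ℝ)
    (hdet : |(g : Matrix (Fin 2) (Fin 2) ℝ).det| = 1) {δ : ℝ} (hδ : 0 < δ) (hδ1 : δ ≤ 1)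
    (m : Fin 3 → Measure (Proj 2)) [∀ i, IsProbabilityMeasure (m i)]
    (h : ∀ i j, i ≠ j → (m i).prod (m j) {p | projSin p.1 p.2 < δ} < 1 / 4)
    (hg : ∀ i j, i ≠ j → ((m i).map (projAction g)).prod ((m j).map (projAction g))
      {p | projSin p.1 p.2 < δ} < 1 / 4) :
    opNorm (g : Matrix (Fin 2) (Fin 2) ℝ) ≤ 4 / δ ^ 2 := by
  by_contra! hlt
  obtain ⟨S, hS, hS1, hS2⟩ := exists_measurableSet_projSin_lt g hdet hδ hδ1 hlt
  have hg' : ∀ i j, i ≠ j → (m i).prod (m j)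
      {p | projSin (projAction g p.1) (projAction g p.2) < δ} < 1 / 4 := fun i j hij => by
    have := hg i j hij
    rwa [Measure.map_prod_map _ _ (measurable_projAction g) (measurable_projAction g),
      Measure.map_apply ((measurable_projAction g).prodMap (measurable_projAction g))
        (measurableSet_lt measurable_projSin measurable_const)] at this
  have hprod : ∀ i j (T : Set (Proj 2)), 1 / 2 ≤ m i T → 1 / 2 ≤ m j T →
      1 / 4 ≤ (m i).prod (m j) (T ×ˢ T) := fun i j T hi hj => by
    rw [Measure.prod_prod]
    refine le_trans (le_of_eq ?_) (mul_le_mul' hi hj)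
    rw [one_div, one_div, ← ENNReal.mul_inv (by simp) (by simp)]
    norm_num
  have hhalf : ∀ i, ¬ 1 / 2 ≤ m i S → 1 / 2 ≤ m i Sᶜ := fun i hi => by
    by_contra hi'
    push Not at hi hi'
    have h1 := ENNReal.add_lt_add hi hi'
    rw [measure_add_measure_compl hS, measure_univ, ENNReal.add_halves] at h1
    exact lt_irrefl _ h1
  obtain ⟨i, j, hij, hc⟩ := Fintype.exists_ne_map_eq_of_card_lt (fun i => 1 / 2 ≤ m i S)
    (by simp)
  simp only [eq_iff_iff] at hc
  by_cases hi : 1 / 2 ≤ m i S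
  · refine ((hprod i j S hi (hc.1 hi)).trans (measure_mono ?_)).not_gt (hg' i j hij)
    exact fun p hp => hS2 _ hp.1 _ hp.2
  · refine ((hprod i j Sᶜ (hhalf i hi) (hhalf j (mt hc.2 hi))).trans
      (measure_mono ?_)).not_gt (h i j hij)
    exact fun p hp => hS1 _ hp.1 _ hp.2

/-- Iterates of a cocycle with determinant `±1` have determinant `±1`. -/
lemma abs_det_cocycleIter {X : Type*} (f : X → X) (A : X → GL (Fin 2) ℝ)
    (hdet : ∀ x, |(A x : Matrix (Fin 2) (Fin 2) ℝ).det| = 1) (n : ℕ) (x : X) :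
    |((cocycleIter f A n x : GL (Fin 2) ℝ) : Matrix (Fin 2) (Fin 2) ℝ).det| = 1 := by
  induction n generalizing x with
  | zero => simp [cocycleIter]
  | succ n ih => simp [cocycleIter, abs_mul, ih, hdet]

/-- Equivariance of a family of measures on the projective line passes to iterates. -/
lemma map_projAction_cocycleIter {X : Type*} (f : X → X) (A : X → GL (Fin 2) ℝ)
    (κ : X → Measure (Proj 2)) (n : ℕ) (x : X)
    (h : ∀ k, (κ (f^[k] x)).map (projAction (A (f^[k] x))) = κ (f (f^[k] x))) :
    (κ x).map (projAction (cocycleIter f A n x)) = κ (f^[n] x) := by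
  induction n generalizing x with
  | zero =>
    have : projAction (1 : GL (Fin 2) ℝ) = id := funext projAction_one
    simp [cocycleIter, this]
  | succ n ih =>
    rw [Function.iterate_succ_apply, ← ih (f x) fun k => h (k + 1), ← show _ = κ (f x) from h 0,
      Function.iterate_zero_apply,
      Measure.map_map (measurable_projAction _) (measurable_projAction _)]
    congr 1
    exact funext fun u => projAction_mul _ _ u

open Classical ProbabilityTheory in
/-- There are no three pairwise distinct ergodic measures over an essentially unbounded cocycle. -/
lemma not_pairwise_ne_of_essentiallyUnbounded
    {X : Type*} [MeasurableSpace X] [StandardBorelSpace X]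
    {μ : Measure X} [IsProbabilityMeasure μ]
    {f : X → X} (hinj : Function.Injective f) (hf : MeasurePreserving f μ μ)
    {A : X → GL (Fin 2) ℝ} (hdet : ∀ x, |(A x : Matrix (Fin 2) (Fin 2) ℝ).det| = 1)
    (hunb : ∀ᵐ x ∂μ, ConvergesEssentiallyToInfinity fun n =>
        opNorm ((cocycleIter f A n x : GL (Fin 2) ℝ) : Matrix (Fin 2) (Fin 2) ℝ))
    (ρ : Fin 3 → Measure (X × Proj 2)) [∀ i, IsProbabilityMeasure (ρ i)]
    (hfst : ∀ i, (ρ i).fst = μ)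
    (herg : ∀ i, Ergodic (fun q : X × Proj 2 => (f q.1, projAction (A q.1) q.2)) (ρ i)) :
    ¬ Pairwise fun i j => ρ i ≠ ρ j := by
  intro hne
  let κ : Fin 3 → Kernel X (Proj 2) := fun i => (ρ i).condKernel
  let η : {p : Fin 3 × Fin 3 // p.1 ≠ p.2} → Kernel X (Proj 2 × Proj 2) :=
    fun p => κ p.1.1 ×ₖ κ p.1.2
  have hη : ∀ᵐ x ∂μ, ∀ p, η p x {z | projSin z.1 z.2 ≤ 0} = 0 := by
    refine ae_all_iff.2 fun p => ?_
    filter_upwards [condKernel_mutuallySingular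
      ((herg p.1.1).mutuallySingular_of_ne (herg p.1.2) (hne p.2)) (hfst _) (hfst _)] with x hx
    rw [Kernel.prod_apply]
    exact measure_mono_null
      (fun z hz => eq_of_projSin_eq_zero (le_antisymm hz (projSin_nonneg _ _))) hx.prod_diagonal
  obtain ⟨n, hn⟩ := ((tendsto_measure_compl_forall_kernel_lt η measurable_projSin hη
    (ε := 1 / 4) (by simp)).eventually_lt_const (u := 1 / 4) (by simp)).exists
  set δ : ℝ := 1 / ((n : ℝ) + 1) with hδ
  have hδ0 : 0 < δ := by positivity
  have hδ1 : δ ≤ 1 := (div_le_one (by positivity)).2 (by linarith [(Nat.cast_nonneg n : (0 : ℝ) ≤ n)])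
  set B := {x | ∀ p, η p x {z | projSin z.1 z.2 < δ} < 1 / 4} with hB
  have hBm : MeasurableSet B := by
    have : B = ⋂ p, {x | η p x {z | projSin z.1 z.2 < δ} < 1 / 4} := by ext; simp [hB]
    rw [this]
    exact MeasurableSet.iInter fun p => measurableSet_lt
      ((η p).measurable_coe (measurableSet_lt measurable_projSin measurable_const))
      measurable_const
  have hequiv : ∀ᵐ x ∂μ, ∀ i k,
      (κ i (f^[k] x)).map (projAction (A (f^[k] x))) = κ i (f (f^[k] x)) := by
    refine ae_all_iff.2 fun i => ae_all_iff.2 fun k => ?_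
    have h := condKernel_map_ae_eq_of_skewProduct (ρ := ρ i) hinj (by rwa [hfst])
      (a := fun x => projAction (A x)) (herg i).toMeasurePreserving
    rw [hfst] at h
    exact (hf.iterate k).quasiMeasurePreserving.ae h
  obtain ⟨x, hxB, ⟨hxu, hxe⟩, hxR⟩ := hf.exists_mem_two_mul_card_le hBm hn (hunb.and hequiv)
  have hbound : ∀ k, f^[k] x ∈ B →
      opNorm ((cocycleIter f A k x : GL (Fin 2) ℝ) : Matrix (Fin 2) (Fin 2) ℝ) ≤ 4 / δ ^ 2 := by
    intro k hk
    refine opNorm_le_of_prod_projSin_lt _ (abs_det_cocycleIter f A hdet k x) hδ0 hδ1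
      (fun i => κ i x) (fun i j hij => ?_) (fun i j hij => ?_)
    · simpa only [η, Kernel.prod_apply] using hxB ⟨(i, j), hij⟩
    · rw [map_projAction_cocycleIter f A (κ i) k x (hxe i),
        map_projAction_cocycleIter f A (κ j) k x (hxe j)]
      simpa only [η, Kernel.prod_apply] using hk ⟨(i, j), hij⟩
  have hdens := hxu (4 / δ ^ 2) (by positivity)
  have := one_half_le_lowerDensity (D := {k | opNorm ((cocycleIter f A k x : GL (Fin 2) ℝ) :
    Matrix (Fin 2) (Fin 2) ℝ) ≤ 4 / δ ^ 2}) fun n => by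
      refine le_trans ?_ (hxR n)
      gcongr with k hk
      exact hbound k
  rw [hdens] at this
  norm_num at this

/-- An essentially unbounded `SL±(2)`-valued cocycle over an ergodic
invertible transformation admits at most two ergodic invariant probability measures on
`X × ℙ(ℝ²)` projecting to `μ`. -/
theorem stmt6
    {X : Type*} [MeasurableSpace X] [StandardBorelSpace X]
    (μ : Measure X) [IsProbabilityMeasure μ]
    (f : X → X) (hbij : Function.Bijective f) (herg : Ergodic f μ)
    (A : X → GL (Fin 2) ℝ)
    (hA : Measurable fun x => ((A x : Matrix (Fin 2) (Fin 2) ℝ)))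
    (hdet : ∀ x, (A x : Matrix (Fin 2) (Fin 2) ℝ).det = 1 ∨
                 (A x : Matrix (Fin 2) (Fin 2) ℝ).det = -1)
    (hunb : ∀ᵐ x ∂μ, ConvergesEssentiallyToInfinity fun n =>
        opNorm ((cocycleIter f A n x : GL (Fin 2) ℝ) : Matrix (Fin 2) (Fin 2) ℝ))
    :
    ∀ μ₁ μ₂ μ₃ : Measure (X × Proj 2),
      IsProbabilityMeasure μ₁ → μ₁.map Prod.fst = μ →
      Ergodic (fun q : X × Proj 2 => (f q.1, projAction (A q.1) q.2)) μ₁ →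
      IsProbabilityMeasure μ₂ → μ₂.map Prod.fst = μ →
      Ergodic (fun q : X × Proj 2 => (f q.1, projAction (A q.1) q.2)) μ₂ →
      IsProbabilityMeasure μ₃ → μ₃.map Prod.fst = μ →
      Ergodic (fun q : X × Proj 2 => (f q.1, projAction (A q.1) q.2)) μ₃ →
      μ₁ = μ₂ ∨ μ₁ = μ₃ ∨ μ₂ = μ₃ := by
  intro μ₁ μ₂ μ₃ hp₁ hm₁ he₁ hp₂ hm₂ he₂ hp₃ hm₃ he₃
  by_contra! hne
  obtain ⟨h12, h13, h23⟩ := hne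
  have : ∀ i, IsProbabilityMeasure (![μ₁, μ₂, μ₃] i) := by
    intro i
    fin_cases i <;> assumption
  refine not_pairwise_ne_of_essentiallyUnbounded hbij.injective herg.toMeasurePreserving
    (fun x => abs_eq zero_le_one |>.2 (hdet x)) hunb ![μ₁, μ₂, μ₃] ?_ ?_ ?_
  · intro i
    fin_cases i <;> assumption
  · intro i
    fin_cases i <;> assumption
  · intro i j hij
    fin_cases i <;> fin_cases j <;> simp_all [eq_comm]
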